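/- Let 𝒳, ℒ ⊆ ℝ^d be symmetric convex sets with B(0, r) ⊆ 𝒳, ℒ ⊆ B(0, R) for some 0 < r ≤ R. Suppose C > 0 is such that for every n ∈ ℕ, every x₀ ∈ ℝ^d, and every predictable sequence x₁, …, x_n, with ε uniform on {−1,1}^n: E_ε‖x₀ + Σ_{i=1}^n ε_i x_i(ε)‖_{𝒳^c}² ≤ C²·(‖x₀‖_ℒ² + Σ_{i=1}^n E_ε‖x_i(ε)‖_ℒ²). Then there exists a nonnegative convex 2-homogeneous function f₀ : ℝ^d → ℝ such that: (i) f₀ is 1-strongly convex with respect to the norm ‖·‖_{ℒ^c}; (ii) (1/2)‖x‖_{ℒ^c}² ≤ f₀(x) ≤ (C²/2)‖x‖_𝒳² for all x ∈ ℝ^d; and (iii) |f₀(x₁) − f₀(x₂)| ≤ C²·‖x₁ − x₂‖_𝒳·max(‖x₁‖_𝒳, ‖x₂‖_𝒳) for all x₁, x₂ ∈ ℝ^d. -/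

import Mathlib

open RealInnerProductSpace

/-- The dual set `C^c = {x : ⟨x,y⟩ ≤ 1 for all y ∈ C}` of a set `C ⊆ ℝ^d`. -/
def dualSet {d : ℕ} (C : Set (EuclideanSpace ℝ (Fin d))) : Set (EuclideanSpace ℝ (Fin d)) :=
  {x | ∀ y ∈ C, ⟪x, y⟫ ≤ 1}

/-- The real sign `±1` associated to a boolean coordinate of a Rademacher vector. -/
def signv (b : Bool) : ℝ := if b then 1 else -1

/-!
Let `W x` be the largest expected value of `‖S‖²_{𝒳^c} / (2 C²) - ½ ∑ ‖xᵢ‖²_ℒ` over all finite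
martingales `S = x + ∑ εᵢ xᵢ` started at `x`. The hypothesis says precisely that `W ≤ ½ ‖·‖²_ℒ`,
the trivial martingale gives `W ≥ ‖·‖²_{𝒳^c} / (2 C²)`, and playing one round before an optimal
continuation gives the smoothness estimate `W (x + y) + W (x - y) ≤ 2 W x + ‖y‖²_ℒ`. The regularizer
is the convex conjugate of `W`: conjugation reverses the two bounds and turns smoothness into
midpoint strong convexity. The Lipschitz estimate follows because the square root of a nonnegative
convex `2`-homogeneous function is subadditive.
-/

open scoped BigOperators

section InnerPolar

variable {E : Type*} [NormedAddCommGroup E] [InnerProductSpace ℝ E]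

/-- The one-sided polar `{x | ∀ y ∈ K, ⟪x, y⟫ ≤ 1}` of a set in a real inner product space; on
`EuclideanSpace ℝ (Fin d)` it is `dualSet` by definition. -/
def innerPolar (K : Set E) : Set E :=
  {x | ∀ y ∈ K, ⟪x, y⟫ ≤ 1}

theorem closedBall_inv_subset_innerPolar {K : Set E} {R : ℝ} (hR : 0 < R)
    (hK : K ⊆ Metric.closedBall 0 R) : Metric.closedBall 0 R⁻¹ ⊆ innerPolar K := by
  intro x hx y hy
  have hx : ‖x‖ ≤ R⁻¹ := mem_closedBall_zero_iff.1 hx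
  have hy : ‖y‖ ≤ R := mem_closedBall_zero_iff.1 (hK hy)
  calc ⟪x, y⟫ ≤ ‖x‖ * ‖y‖ := real_inner_le_norm x y
    _ ≤ R⁻¹ * R := by gcongr
    _ = 1 := inv_mul_cancel₀ hR.ne'

theorem inner_le_gauge_mul_gauge_innerPolar {K : Set E} (hK : Absorbent ℝ K)
    (hpolar : Absorbent ℝ (innerPolar K)) (x p : E) :
    ⟪x, p⟫ ≤ gauge K x * gauge (innerPolar K) p := by
  refine le_mul_of_forall_lt₀ fun α hα β hβ => ?_
  obtain ⟨s, hs, hsα, u, hu, rfl⟩ := exists_lt_of_gauge_lt hK hα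
  obtain ⟨t, ht, htβ, v, hv, rfl⟩ := exists_lt_of_gauge_lt hpolar hβ
  calc ⟪s • u, t • v⟫ = s * t * ⟪v, u⟫ := by
        rw [real_inner_smul_left, real_inner_smul_right, real_inner_comm, mul_assoc]
    _ ≤ s * t * 1 := by gcongr; exact hv u hu
    _ ≤ α * β := by rw [mul_one]; gcongr; exact hs.le.trans hsα.le

theorem inner_sub_gauge_innerPolar_sq_le {K : Set E} (hK : Absorbent ℝ K)
    (hpolar : Absorbent ℝ (innerPolar K)) {c : ℝ} (hc : 0 < c) (x p : E) :
    ⟪x, p⟫ - (2 * c)⁻¹ * gauge (innerPolar K) p ^ 2 ≤ c / 2 * gauge K x ^ 2 := by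
  have young : c / 2 * gauge K x ^ 2 + (2 * c)⁻¹ * gauge (innerPolar K) p ^ 2
      - gauge K x * gauge (innerPolar K) p
      = (2 * c)⁻¹ * (c * gauge K x - gauge (innerPolar K) p) ^ 2 := by
    field_simp
    ring
  have hsq : 0 ≤ (2 * c)⁻¹ * (c * gauge K x - gauge (innerPolar K) p) ^ 2 := by positivity
  linarith [inner_le_gauge_mul_gauge_innerPolar hK hpolar x p]

theorem gauge_innerPolar_le {K : Set E} {z : E} {s : ℝ} (hs : 0 ≤ s)
    (hz : ∀ p ∈ K, ⟪z, p⟫ ≤ s) : gauge (innerPolar K) z ≤ s := by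
  refine le_of_forall_gt_imp_ge_of_dense fun t ht => ?_
  have ht₀ : 0 < t := hs.trans_lt ht
  refine gauge_le_of_mem ht₀.le ((Set.mem_smul_set_iff_inv_smul_mem₀ ht₀.ne' _ _).2 fun p hp => ?_)
  rw [real_inner_smul_left, inv_mul_le_iff₀ ht₀, mul_one]
  exact (hz p hp).trans ht.le

theorem half_gauge_innerPolar_sq_le {K : Set E} {z : E} {c : ℝ}
    (h : ∀ p, ⟪z, p⟫ - 1 / 2 * gauge K p ^ 2 ≤ c) :
    1 / 2 * gauge (innerPolar K) z ^ 2 ≤ c := by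
  have hc : 0 ≤ c := by simpa using h 0
  suffices hz : gauge (innerPolar K) z ≤ √(2 * c) by
    have := (Real.le_sqrt (gauge_nonneg z) (by positivity)).1 hz
    linarith
  refine gauge_innerPolar_le (Real.sqrt_nonneg _) fun p hp => ?_
  rcases le_total ⟪z, p⟫ 0 with hneg | hpos
  · exact hneg.trans (Real.sqrt_nonneg _)
  refine Real.le_sqrt_of_sq_le ?_
  -- For `gauge K p ≤ 1`, the best multiple of `p` to test `h` with is `⟪z, p⟫ • p`.
  have htest := h (⟪z, p⟫ • p)
  rw [gauge_smul_of_nonneg hpos, real_inner_smul_right, smul_eq_mul, mul_pow] at htest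
  have hgauge : gauge K p ^ 2 ≤ 1 := pow_le_one₀ (gauge_nonneg p) (gauge_le_one_of_mem hp)
  linarith [mul_le_mul_of_nonneg_left hgauge (sq_nonneg ⟪z, p⟫)]

end InnerPolar

theorem absorbent_of_closedBall_subset {E : Type*} [SeminormedAddCommGroup E] [NormedSpace ℝ E]
    {K : Set E} {r : ℝ} (hr : 0 < r) (hK : Metric.closedBall 0 r ⊆ K) : Absorbent ℝ K :=
  absorbent_nhds_zero (Filter.mem_of_superset (Metric.closedBall_mem_nhds 0 hr) hK)

section TwoHomogeneous

variable {E : Type*} [AddCommGroup E] [Module ℝ E]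

/-- Positive homogeneity of degree two. -/
def IsTwoHomogeneous (f : E → ℝ) : Prop :=
  ∀ t : ℝ, 0 ≤ t → ∀ y, f (t • y) = t ^ 2 * f y

theorem isTwoHomogeneous_gauge_sq (K : Set E) : IsTwoHomogeneous fun x => gauge K x ^ 2 :=
  fun t ht x => by simp only [gauge_smul_of_nonneg ht, smul_eq_mul, mul_pow]

namespace IsTwoHomogeneous

variable {f : E → ℝ}

theorem const_mul (hf : IsTwoHomogeneous f) (c : ℝ) : IsTwoHomogeneous fun x => c * f x :=
  fun t ht x => by simp only [hf t ht, mul_left_comm]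

theorem map_zero (hf : IsTwoHomogeneous f) : f 0 = 0 := by
  simpa using hf 0 le_rfl 0

theorem of_map_smul_le (h₀ : f 0 = 0) (h : ∀ t : ℝ, 0 < t → ∀ y, f (t • y) ≤ t ^ 2 * f y) :
    IsTwoHomogeneous f := by
  intro t ht y
  rcases ht.eq_or_lt with rfl | ht
  · simp [h₀]
  refine le_antisymm (h t ht y) ?_
  have hinv := h t⁻¹ (inv_pos.2 ht) (t • y)
  rwa [inv_smul_smul₀ ht.ne', inv_pow, le_inv_mul_iff₀ (by positivity)] at hinv

theorem map_add_le_sq (hf : IsTwoHomogeneous f) (hconv : ConvexOn ℝ Set.univ f) {x y : E}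
    {a b : ℝ} (ha : 0 < a) (hb : 0 < b) (hx : f x ≤ a ^ 2) (hy : f y ≤ b ^ 2) :
    f (x + y) ≤ (a + b) ^ 2 := by
  have hcomb : x + y = (a / (a + b)) • ((a + b) / a) • x + (b / (a + b)) • ((a + b) / b) • y := by
    rw [smul_smul, smul_smul, div_mul_div_cancel₀ (by positivity),
      div_mul_div_cancel₀ (by positivity), div_self ha.ne', div_self hb.ne', one_smul, one_smul]
  calc f (x + y) ≤ a / (a + b) * f (((a + b) / a) • x) + b / (a + b) * f (((a + b) / b) • y) := by
        rw [hcomb]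
        exact hconv.2 trivial trivial (by positivity) (by positivity) (by field_simp)
    _ = a / (a + b) * (((a + b) / a) ^ 2 * f x) + b / (a + b) * (((a + b) / b) ^ 2 * f y) := by
        rw [hf _ (by positivity), hf _ (by positivity)]
    _ ≤ a / (a + b) * (((a + b) / a) ^ 2 * a ^ 2) + b / (a + b) * (((a + b) / b) ^ 2 * b ^ 2) := by
        gcongr
    _ = (a + b) ^ 2 := by field_simp

theorem sqrt_map_add_le (hf : IsTwoHomogeneous f) (hconv : ConvexOn ℝ Set.univ f) (x y : E) :
    √(f (x + y)) ≤ √(f x) + √(f y) := by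
  refine le_of_forall_pos_le_add fun η hη => ?_
  have hsq : ∀ z, f z ≤ (√(f z) + η / 2) ^ 2 := fun z =>
    (Real.sqrt_le_left (by positivity)).1 (by linarith)
  have hadd := hf.map_add_le_sq hconv (by positivity) (by positivity) (hsq x) (hsq y)
  refine (Real.sqrt_le_sqrt hadd).trans ?_
  rw [Real.sqrt_sq (by positivity)]
  linarith

theorem sub_le_of_le_mul_sq (hf : IsTwoHomogeneous f) (hconv : ConvexOn ℝ Set.univ f)
    (hf₀ : ∀ x, 0 ≤ f x) {ρ : E → ℝ} (hρ : ∀ x, 0 ≤ ρ x) {c : ℝ} (hc : 0 ≤ c)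
    (hfρ : ∀ x, f x ≤ c * ρ x ^ 2) (x₁ x₂ : E) :
    f x₁ - f x₂ ≤ 2 * c * ρ (x₁ - x₂) * max (ρ x₁) (ρ x₂) := by
  have hsqrt : ∀ x, √(f x) ≤ √c * ρ x := fun x => by
    rw [← Real.sqrt_sq (hρ x), ← Real.sqrt_mul hc]
    exact Real.sqrt_le_sqrt (hfρ x)
  have hsub : √(f x₁) - √(f x₂) ≤ √c * ρ (x₁ - x₂) := by
    have htri := hf.sqrt_map_add_le hconv (x₁ - x₂) x₂
    rw [sub_add_cancel] at htri
    linarith [hsqrt (x₁ - x₂)]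
  have hadd : √(f x₁) + √(f x₂) ≤ 2 * (√c * max (ρ x₁) (ρ x₂)) := by
    rw [two_mul]
    gcongr
    · exact (hsqrt x₁).trans (by gcongr; exact le_max_left _ _)
    · exact (hsqrt x₂).trans (by gcongr; exact le_max_right _ _)
  calc f x₁ - f x₂ = √(f x₁) ^ 2 - √(f x₂) ^ 2 := by rw [Real.sq_sqrt (hf₀ _), Real.sq_sqrt (hf₀ _)]
    _ = (√(f x₁) - √(f x₂)) * (√(f x₁) + √(f x₂)) := by ring
    _ ≤ √c * ρ (x₁ - x₂) * (2 * (√c * max (ρ x₁) (ρ x₂))) :=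
        mul_le_mul hsub hadd (by positivity) (mul_nonneg (Real.sqrt_nonneg c) (hρ _))
    _ = 2 * √c ^ 2 * ρ (x₁ - x₂) * max (ρ x₁) (ρ x₂) := by ring
    _ = 2 * c * ρ (x₁ - x₂) * max (ρ x₁) (ρ x₂) := by rw [Real.sq_sqrt hc]

end IsTwoHomogeneous

theorem add_half_le_of_midpoint_of_subgradient {f q : E → ℝ} (hq : IsTwoHomogeneous q)
    (hmid : ∀ x y, f ((1 / 2 : ℝ) • (x + y)) + 1 / 8 * q (y - x) ≤ 1 / 2 * f x + 1 / 2 * f y)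
    {x : E} {g : E →ₗ[ℝ] ℝ} (hg : ∀ z, f x + g (z - x) ≤ f z) (y : E) :
    f x + g (y - x) + 1 / 2 * q (y - x) ≤ f y := by
  -- If `f` exceeds its tangent at `x` by `κ * q`, then `hmid` improves `κ` to `κ / 2 + 1 / 4`;
  -- iterating from `κ = 0` converges to the fixed point `1 / 2`.
  have improve : ∀ (k : ℕ) (z : E),
      f x + g (z - x) + (1 / 2) * (1 - (1 / 2 : ℝ) ^ k) * q (z - x) ≤ f z := by
    intro k
    induction k with
    | zero => simpa using hg
    | succ k ih =>
      intro z
      have hhalf := ih ((1 / 2 : ℝ) • (x + z))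
      rw [show (1 / 2 : ℝ) • (x + z) - x = (1 / 2 : ℝ) • (z - x) by module, map_smul, smul_eq_mul,
        hq _ (by norm_num)] at hhalf
      rw [pow_succ]
      linarith [hmid x z]
  have hlim : Filter.Tendsto
      (fun k : ℕ => f x + g (y - x) + (1 / 2) * (1 - (1 / 2 : ℝ) ^ k) * q (y - x)) Filter.atTop
      (nhds (f x + g (y - x) + (1 / 2) * (1 - 0) * q (y - x))) :=
    (((tendsto_pow_atTop_nhds_zero_of_lt_one (by norm_num) (by norm_num)).const_sub 1).const_mul
      _ |>.mul_const _).const_add _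
  simpa using le_of_tendsto' hlim fun k => improve k y

end TwoHomogeneous

section Predictable

theorem expect_fin_succ_bool {n : ℕ} (F : (Fin (n + 1) → Bool) → ℝ) :
    𝔼 ε, F ε = (𝔼 ε, F (Fin.cons true ε) + 𝔼 ε, F (Fin.cons false ε)) / 2 := by
  rw [← Fintype.expect_equiv (Fin.consEquiv fun _ => Bool) (fun p => F (Fin.cons p.1 p.2)) F
    fun _ => rfl, ← Finset.univ_product_univ, Finset.expect_product,
    Fintype.expect_eq_sum_div_card, Fintype.sum_bool, Fintype.card_bool, Nat.cast_ofNat]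

theorem expect_fin_bool_eq_sum_div {n : ℕ} (F : (Fin n → Bool) → ℝ) :
    𝔼 ε, F ε = (∑ ε, F ε) / 2 ^ n := by
  simp [Fintype.expect_eq_sum_div_card]

/-- A sequence of functions of the signs `ε` is predictable if its `i`-th term depends only on the
signs before `i`. -/
def IsPredictable {E : Type*} {n : ℕ} (x : Fin n → (Fin n → Bool) → E) : Prop :=
  ∀ (i : Fin n) (ε δ : Fin n → Bool), (∀ j : Fin n, j < i → ε j = δ j) → x i ε = x i δ

/-- The sequence whose first term is `y` and which continues with `u` or `v` according to the first
sign. -/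
def signBranch {E : Type*} {n : ℕ} (y : E) (u v : Fin n → (Fin n → Bool) → E) :
    Fin (n + 1) → (Fin (n + 1) → Bool) → E :=
  Fin.cons (fun _ => y) fun j ε => if ε 0 then u j (Fin.tail ε) else v j (Fin.tail ε)

theorem isPredictable_signBranch {E : Type*} {n : ℕ} (y : E) {u v : Fin n → (Fin n → Bool) → E}
    (hu : IsPredictable u) (hv : IsPredictable v) : IsPredictable (signBranch y u v) := by
  intro i ε δ h
  induction i using Fin.cases with
  | zero => rfl
  | succ j =>
    have hhead : ε 0 = δ 0 := h 0 j.succ_pos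
    have htail : ∀ k < j, Fin.tail ε k = Fin.tail δ k :=
      fun k hk => h k.succ (Fin.succ_lt_succ_iff.2 hk)
    simp only [signBranch, Fin.cons_succ, hhead, hu j _ _ htail, hv j _ _ htail]

variable {E : Type*} [AddCommGroup E] [Module ℝ E]

/-- The terminal reward `a` of the martingale `x₀ + ∑ εᵢ xᵢ` minus the costs `b` of its increments,
along the path `ε`. -/
def netReward (a b : E → ℝ) {n : ℕ} (x₀ : E) (x : Fin n → (Fin n → Bool) → E)
    (ε : Fin n → Bool) : ℝ :=
  a (x₀ + ∑ i, signv (ε i) • x i ε) - ∑ i, b (x i ε)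

theorem netReward_signBranch_cons_true (a b : E → ℝ) {n : ℕ} (x₀ y : E)
    (u v : Fin n → (Fin n → Bool) → E) (ε : Fin n → Bool) :
    netReward a b x₀ (signBranch y u v) (Fin.cons true ε) = netReward a b (x₀ + y) u ε - b y := by
  simp only [netReward, signBranch, signv, Fin.sum_univ_succ, Fin.cons_zero, Fin.cons_succ,
    Fin.tail_cons, if_true, one_smul, add_assoc]
  ring

theorem netReward_signBranch_cons_false (a b : E → ℝ) {n : ℕ} (x₀ y : E)
    (u v : Fin n → (Fin n → Bool) → E) (ε : Fin n → Bool) :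
    netReward a b x₀ (signBranch y u v) (Fin.cons false ε) = netReward a b (x₀ - y) v ε - b y := by
  simp only [netReward, signBranch, signv, Fin.sum_univ_succ, Fin.cons_zero, Fin.cons_succ,
    Fin.tail_cons, Bool.false_eq_true, if_false, neg_smul, one_smul, add_assoc, sub_eq_add_neg x₀]
  ring

theorem expect_netReward_signBranch (a b : E → ℝ) {n : ℕ} (x₀ y : E)
    (u v : Fin n → (Fin n → Bool) → E) :
    𝔼 ε, netReward a b x₀ (signBranch y u v) ε =
      (𝔼 ε, netReward a b (x₀ + y) u ε + 𝔼 ε, netReward a b (x₀ - y) v ε) / 2 - b y := by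
  simp only [expect_fin_succ_bool, netReward_signBranch_cons_true, netReward_signBranch_cons_false,
    Finset.expect_sub_distrib, Fintype.expect_const]
  ring

/-- No predictable strategy started at `x₀` has expected net reward above `b x₀`. This is the
martingale type inequality `𝔼 a (x₀ + ∑ εᵢ xᵢ) ≤ b x₀ + ∑ 𝔼 b xᵢ`, with all terms that depend on
`ε` under one expectation. -/
def MartingaleDominated (a b : E → ℝ) : Prop :=
  ∀ (n : ℕ) (x₀ : E) (x : Fin n → (Fin n → Bool) → E), IsPredictable x →
    𝔼 ε, netReward a b x₀ x ε ≤ b x₀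

theorem martingaleDominated_of_sq_le {N L : E → ℝ} {C : ℝ} (hC : C ≠ 0)
    (h : ∀ (n : ℕ) (x₀ : E) (x : Fin n → (Fin n → Bool) → E), IsPredictable x →
      (∑ ε : Fin n → Bool, N (x₀ + ∑ i : Fin n, signv (ε i) • x i ε) ^ 2) / 2 ^ n
        ≤ C ^ 2 * (L x₀ ^ 2 + ∑ i : Fin n, (∑ ε : Fin n → Bool, L (x i ε) ^ 2) / 2 ^ n)) :
    MartingaleDominated (fun x => (2 * C ^ 2)⁻¹ * N x ^ 2) (fun x => 1 / 2 * L x ^ 2) := by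
  intro n x₀ x hx
  have hscaled := h n x₀ x hx
  simp only [← expect_fin_bool_eq_sum_div] at hscaled
  simp only [netReward, Finset.expect_sub_distrib, ← Finset.mul_sum, ← Finset.mul_expect,
    Finset.expect_sum_comm]
  rw [sub_le_iff_le_add, inv_mul_le_iff₀ (by positivity)]
  linarith

end Predictable

/-- A strategy in the game where a fair sign is tossed in every round: `leaf` stops, and
`node y up down` moves by `±y` and continues with `up` or `down`. In contrast to predictable
sequences, the branches may have different lengths. -/
inductive SignTree (E : Type*)
  | leaf : SignTree E
  | node (y : E) (up down : SignTree E) : SignTree E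

namespace SignTree

variable {E : Type*}

/-- The number of rounds played on the longest branch. -/
def depth : SignTree E → ℕ
  | leaf => 0
  | node _ up down => max up.depth down.depth + 1

/-- The strategy with all moves transformed by `m`. -/
def map (m : E → E) : SignTree E → SignTree E
  | leaf => leaf
  | node y up down => node (m y) (up.map m) (down.map m)

/-- The expected net reward of a strategy as a function of the starting point: the terminal reward
is `a` and a move by `±y` costs `b y`. -/
noncomputable def payoff [AddCommGroup E] (a b : E → ℝ) : SignTree E → E → ℝ
  | leaf, x => a x
  | node y up down, x => (up.payoff a b (x + y) + down.payoff a b (x - y)) / 2 - b y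

/-- The optimal expected net reward over all strategies. It is meaningful only where the payoffs are
bounded above. -/
noncomputable def value [AddCommGroup E] (a b : E → ℝ) (x : E) : ℝ :=
  ⨆ T : SignTree E, T.payoff a b x

instance : Nonempty (SignTree E) := ⟨leaf⟩

variable [AddCommGroup E] {a b : E → ℝ}

theorem value_add_add_value_sub_le
    (hbdd : ∀ x, BddAbove (Set.range fun T : SignTree E => T.payoff a b x)) (x y : E) :
    value a b (x + y) + value a b (x - y) ≤ 2 * (value a b x + b y) := by
  refine ciSup_add_ciSup_le fun up down => ?_
  have hnode : (up.payoff a b (x + y) + down.payoff a b (x - y)) / 2 - b y ≤ value a b x :=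
    le_ciSup (hbdd x) (node y up down)
  linarith

variable [Module ℝ E]

theorem payoff_smul (ha : IsTwoHomogeneous a) (hb : IsTwoHomogeneous b) {t : ℝ} (ht : 0 < t)
    (T : SignTree E) (x : E) :
    T.payoff a b (t • x) = t ^ 2 * (T.map (t⁻¹ • ·)).payoff a b x := by
  induction T generalizing x with
  | leaf => exact ha t ht.le x
  | node y up down hup hdown =>
    have hadd : t • x + y = t • (x + t⁻¹ • y) := by rw [smul_add, smul_inv_smul₀ ht.ne']
    have hsub : t • x - y = t • (x - t⁻¹ • y) := by rw [smul_sub, smul_inv_smul₀ ht.ne']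
    have hcost : b y = t ^ 2 * b (t⁻¹ • y) := by rw [← hb t ht.le, smul_inv_smul₀ ht.ne']
    simp only [payoff, map, hadd, hsub, hup, hdown, hcost]
    ring

theorem exists_isPredictable_payoff_eq (hb : b 0 = 0) (T : SignTree E) {n : ℕ}
    (hn : T.depth ≤ n) : ∃ x : Fin n → (Fin n → Bool) → E,
      IsPredictable x ∧ ∀ x₀, T.payoff a b x₀ = 𝔼 ε, netReward a b x₀ x ε := by
  induction T generalizing n with
  | leaf => exact ⟨fun _ _ => 0, fun _ _ _ _ => rfl, fun x₀ => by simp [payoff, netReward, hb]⟩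
  | node y up down hup hdown =>
    obtain ⟨n, rfl⟩ := Nat.exists_eq_add_one_of_ne_zero (Nat.ne_zero_of_lt hn)
    have hmax : max up.depth down.depth ≤ n := Nat.le_of_succ_le_succ hn
    obtain ⟨u, hu, hupEq⟩ := hup ((le_max_left _ _).trans hmax)
    obtain ⟨v, hv, hdownEq⟩ := hdown ((le_max_right _ _).trans hmax)
    refine ⟨signBranch y u v, isPredictable_signBranch y hu hv, fun x₀ => ?_⟩
    rw [payoff, hupEq, hdownEq, expect_netReward_signBranch]

theorem payoff_le (hab : MartingaleDominated a b) (hb : b 0 = 0) (T : SignTree E) (x : E) :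
    T.payoff a b x ≤ b x := by
  obtain ⟨s, hs, hpayoff⟩ := T.exists_isPredictable_payoff_eq (a := a) hb le_rfl
  exact (hpayoff x).trans_le (hab _ x s hs)

theorem bddAbove_range_payoff (hab : MartingaleDominated a b) (hb : b 0 = 0) (x : E) :
    BddAbove (Set.range fun T : SignTree E => T.payoff a b x) :=
  ⟨b x, Set.forall_mem_range.2 fun T => T.payoff_le hab hb x⟩

theorem value_le (hab : MartingaleDominated a b) (hb : b 0 = 0) (x : E) : value a b x ≤ b x :=
  ciSup_le fun T => T.payoff_le hab hb x

theorem le_value (hab : MartingaleDominated a b) (hb : b 0 = 0) (x : E) : a x ≤ value a b x :=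
  le_ciSup (bddAbove_range_payoff hab hb x) leaf

theorem isTwoHomogeneous_value (hab : MartingaleDominated a b) (ha : IsTwoHomogeneous a)
    (hb : IsTwoHomogeneous b) : IsTwoHomogeneous (value a b) := by
  refine .of_map_smul_le ?_ fun t ht x => ciSup_le fun T => ?_
  · refine le_antisymm ?_ ?_
    · simpa only [hb.map_zero] using value_le hab hb.map_zero 0
    · simpa only [ha.map_zero] using le_value hab hb.map_zero 0
  · rw [payoff_smul ha hb ht]
    gcongr
    exact le_ciSup (bddAbove_range_payoff hab hb.map_zero x) _

end SignTree

section InnerConjugate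

variable {E : Type*} [NormedAddCommGroup E] [InnerProductSpace ℝ E]

/-- The convex conjugate of `W` with respect to the inner product. It is meaningful only where the
supremum is finite. -/
noncomputable def innerConjugate (W : E → ℝ) (x : E) : ℝ :=
  ⨆ p, (⟪x, p⟫ - W p)

variable {W : E → ℝ}

theorem inner_sub_le_of_gauge_innerPolar_sq_le {K : Set E} (hK : Absorbent ℝ K)
    (hpolar : Absorbent ℝ (innerPolar K)) {c : ℝ} (hc : 0 < c)
    (hW : ∀ p, (2 * c)⁻¹ * gauge (innerPolar K) p ^ 2 ≤ W p) (x p : E) :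
    ⟪x, p⟫ - W p ≤ c / 2 * gauge K x ^ 2 :=
  (sub_le_sub_left (hW p) _).trans (inner_sub_gauge_innerPolar_sq_le hK hpolar hc x p)

theorem le_innerConjugate (hbdd : ∀ x, BddAbove (Set.range fun p => ⟪x, p⟫ - W p)) (x p : E) :
    ⟪x, p⟫ - W p ≤ innerConjugate W x :=
  le_ciSup (hbdd x) p

theorem convexOn_innerConjugate (hbdd : ∀ x, BddAbove (Set.range fun p => ⟪x, p⟫ - W p)) :
    ConvexOn ℝ Set.univ (innerConjugate W) := by
  refine ⟨convex_univ, fun x _ y _ s t hs ht hst => ciSup_le fun p => ?_⟩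
  calc ⟪s • x + t • y, p⟫ - W p = s * (⟪x, p⟫ - W p) + t * (⟪y, p⟫ - W p) := by
        rw [inner_add_left, real_inner_smul_left, real_inner_smul_left]
        linear_combination W p * hst
    _ ≤ s * innerConjugate W x + t * innerConjugate W y := by
        gcongr <;> exact le_innerConjugate hbdd _ p

theorem isTwoHomogeneous_innerConjugate (hbdd : ∀ x, BddAbove (Set.range fun p => ⟪x, p⟫ - W p))
    (hW : IsTwoHomogeneous W) (hW₀ : ∀ p, 0 ≤ W p) :
    IsTwoHomogeneous (innerConjugate W) := by
  refine .of_map_smul_le (le_antisymm (ciSup_le fun p => ?_) ?_) fun t ht y => ciSup_le fun p => ?_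
  · simpa using hW₀ p
  · simpa [hW.map_zero] using le_innerConjugate hbdd 0 0
  · calc ⟪t • y, p⟫ - W p = t ^ 2 * (⟪y, t⁻¹ • p⟫ - W (t⁻¹ • p)) := by
          rw [real_inner_smul_left, real_inner_smul_right, hW _ (by positivity)]
          field_simp
      _ ≤ t ^ 2 * innerConjugate W y := by
          gcongr
          exact le_innerConjugate hbdd y _

theorem half_gauge_innerPolar_sq_le_innerConjugate {K : Set E}
    (hbdd : ∀ x, BddAbove (Set.range fun p => ⟪x, p⟫ - W p))
    (hW : ∀ p, W p ≤ 1 / 2 * gauge K p ^ 2) (x : E) :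
    1 / 2 * gauge (innerPolar K) x ^ 2 ≤ innerConjugate W x :=
  half_gauge_innerPolar_sq_le fun p =>
    (sub_le_sub_left (hW p) _).trans (le_innerConjugate hbdd x p)

theorem innerConjugate_midpoint_add_le {K : Set E}
    (hbdd : ∀ x, BddAbove (Set.range fun p => ⟪x, p⟫ - W p))
    (hW : ∀ p h, W (p + h) + W (p - h) ≤ 2 * (W p + 1 / 2 * gauge K h ^ 2)) (x y : E) :
    innerConjugate W ((1 / 2 : ℝ) • (x + y)) + 1 / 8 * gauge (innerPolar K) (y - x) ^ 2
      ≤ 1 / 2 * innerConjugate W x + 1 / 2 * innerConjugate W y := by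
  refine le_sub_iff_add_le.1 (ciSup_le fun p => ?_)
  have hpolar : 1 / 2 * gauge (innerPolar K) ((1 / 2 : ℝ) • (y - x)) ^ 2 ≤
      1 / 2 * innerConjugate W x + 1 / 2 * innerConjugate W y
        - (⟪(1 / 2 : ℝ) • (x + y), p⟫ - W p) := by
    refine half_gauge_innerPolar_sq_le fun h => ?_
    have hx := le_innerConjugate hbdd x (p - h)
    have hy := le_innerConjugate hbdd y (p + h)
    rw [inner_sub_right] at hx
    rw [inner_add_right] at hy
    rw [real_inner_smul_left, real_inner_smul_left, inner_sub_left, inner_add_left]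
    linarith [hW p h]
  rw [gauge_smul_of_nonneg (by norm_num), smul_eq_mul] at hpolar
  linarith

end InnerConjugate

theorem stmt11_general {E : Type*} [NormedAddCommGroup E] [InnerProductSpace ℝ E] (𝒳 ℒ : Set E)
    {C : ℝ} (hC : 0 < C) (hsym : ∀ x ∈ 𝒳, -x ∈ 𝒳) (h𝒳 : Absorbent ℝ 𝒳)
    (hpolar : Absorbent ℝ (innerPolar 𝒳))
    (hmg : ∀ (n : ℕ) (x₀ : E) (x : Fin n → (Fin n → Bool) → E), IsPredictable x →
      (∑ ε : Fin n → Bool,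
          gauge (innerPolar 𝒳) (x₀ + ∑ i : Fin n, signv (ε i) • x i ε) ^ 2) / 2 ^ n
        ≤ C ^ 2 * (gauge ℒ x₀ ^ 2 +
            ∑ i : Fin n, (∑ ε : Fin n → Bool, gauge ℒ (x i ε) ^ 2) / 2 ^ n)) :
    ∃ f₀ : E → ℝ, (∀ x, 0 ≤ f₀ x) ∧ ConvexOn ℝ Set.univ f₀ ∧ IsTwoHomogeneous f₀ ∧
      (∀ x y g : E, (∀ z, f₀ x + ⟪g, z - x⟫ ≤ f₀ z) →
        f₀ x + ⟪g, y - x⟫ + (1 / 2) * gauge (innerPolar ℒ) (y - x) ^ 2 ≤ f₀ y) ∧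
      (∀ x, (1 / 2) * gauge (innerPolar ℒ) x ^ 2 ≤ f₀ x ∧
        f₀ x ≤ (C ^ 2 / 2) * gauge 𝒳 x ^ 2) ∧
      (∀ x₁ x₂, |f₀ x₁ - f₀ x₂|
        ≤ C ^ 2 * gauge 𝒳 (x₁ - x₂) * max (gauge 𝒳 x₁) (gauge 𝒳 x₂)) := by
  let a : E → ℝ := fun x => (2 * C ^ 2)⁻¹ * gauge (innerPolar 𝒳) x ^ 2
  let b : E → ℝ := fun x => 1 / 2 * gauge ℒ x ^ 2
  let W : E → ℝ := SignTree.value a b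
  have ha : IsTwoHomogeneous a := (isTwoHomogeneous_gauge_sq _).const_mul _
  have hb : IsTwoHomogeneous b := (isTwoHomogeneous_gauge_sq _).const_mul _
  have hab : MartingaleDominated a b := martingaleDominated_of_sq_le hC.ne' hmg
  have haW : ∀ p, a p ≤ W p := SignTree.le_value hab hb.map_zero
  have hWb : ∀ p, W p ≤ b p := SignTree.value_le hab hb.map_zero
  have hW₀ : ∀ p, 0 ≤ W p := fun p => le_trans (by positivity) (haW p)
  have hle : ∀ x p, ⟪x, p⟫ - W p ≤ C ^ 2 / 2 * gauge 𝒳 x ^ 2 :=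
    inner_sub_le_of_gauge_innerPolar_sq_le h𝒳 hpolar (by positivity) haW
  have hbdd : ∀ x, BddAbove (Set.range fun p => ⟪x, p⟫ - W p) :=
    fun x => ⟨_, Set.forall_mem_range.2 (hle x)⟩
  have hlower := half_gauge_innerPolar_sq_le_innerConjugate hbdd hWb
  have hupper : ∀ x, innerConjugate W x ≤ C ^ 2 / 2 * gauge 𝒳 x ^ 2 := fun x => ciSup_le (hle x)
  have hnonneg : ∀ x, 0 ≤ innerConjugate W x := fun x => le_trans (by positivity) (hlower x)
  have hconv := convexOn_innerConjugate hbdd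
  have hhom := isTwoHomogeneous_innerConjugate hbdd
    (SignTree.isTwoHomogeneous_value hab ha hb) hW₀
  have hmid := innerConjugate_midpoint_add_le hbdd
    (SignTree.value_add_add_value_sub_le (SignTree.bddAbove_range_payoff hab hb.map_zero))
  have hlip : ∀ x₁ x₂, innerConjugate W x₁ - innerConjugate W x₂
      ≤ C ^ 2 * gauge 𝒳 (x₁ - x₂) * max (gauge 𝒳 x₁) (gauge 𝒳 x₂) := fun x₁ x₂ => by
    have h := hhom.sub_le_of_le_mul_sq hconv hnonneg gauge_nonneg (by positivity) hupper x₁ x₂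
    rwa [mul_div_cancel₀ _ two_ne_zero] at h
  refine ⟨innerConjugate W, hnonneg, hconv, hhom, fun x y g hg => ?_,
    fun x => ⟨hlower x, hupper x⟩, fun x₁ x₂ => abs_sub_le_iff.2 ⟨hlip x₁ x₂, ?_⟩⟩
  · exact add_half_le_of_midpoint_of_subgradient (g := innerₗ E g)
      (isTwoHomogeneous_gauge_sq _) hmid hg y
  · rw [← gauge_neg hsym, neg_sub, max_comm]
    exact hlip x₂ x₁

/-- martingale type `2` → ideal regularizer. If for every predictable
sequence `E‖x₀ + Σ εᵢ xᵢ(ε)‖_{𝒳^c}² ≤ C²(‖x₀‖_ℒ² + Σᵢ E‖xᵢ(ε)‖_ℒ²)`, then there exists a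
nonnegative convex `2`-homogeneous `f₀` which is `1`-strongly convex w.r.t. `‖·‖_{ℒ^c}`,
satisfies `½‖x‖_{ℒ^c}² ≤ f₀(x) ≤ (C²/2)‖x‖_𝒳²`, and the Lipschitz estimate
`|f₀(x₁) − f₀(x₂)| ≤ C²‖x₁−x₂‖_𝒳·max(‖x₁‖_𝒳, ‖x₂‖_𝒳)`. -/
theorem stmt11 {d : ℕ} (𝒳 ℒ : Set (EuclideanSpace ℝ (Fin d))) (r R C : ℝ)
    (hr : 0 < r) (hrR : r ≤ R) (hC : 0 < C)
    (hconv𝒳 : Convex ℝ 𝒳) (hsym𝒳 : ∀ x ∈ 𝒳, -x ∈ 𝒳)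
    (hball𝒳₁ : Metric.closedBall (0 : EuclideanSpace ℝ (Fin d)) r ⊆ 𝒳)
    (hball𝒳₂ : 𝒳 ⊆ Metric.closedBall (0 : EuclideanSpace ℝ (Fin d)) R)
    (hconvℒ : Convex ℝ ℒ) (hsymℒ : ∀ x ∈ ℒ, -x ∈ ℒ)
    (hballℒ₁ : Metric.closedBall (0 : EuclideanSpace ℝ (Fin d)) r ⊆ ℒ)
    (hballℒ₂ : ℒ ⊆ Metric.closedBall (0 : EuclideanSpace ℝ (Fin d)) R)
    (hmg : ∀ (n : ℕ) (x₀ : EuclideanSpace ℝ (Fin d))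
        (x : Fin n → (Fin n → Bool) → EuclideanSpace ℝ (Fin d)),
      (∀ (i : Fin n) (ε ε' : Fin n → Bool), (∀ j : Fin n, j < i → ε j = ε' j) →
        x i ε = x i ε') →
      (∑ ε : Fin n → Bool,
          gauge (dualSet 𝒳) (x₀ + ∑ i : Fin n, signv (ε i) • x i ε) ^ 2) / 2 ^ n
        ≤ C ^ 2 * (gauge ℒ x₀ ^ 2 +
            ∑ i : Fin n, (∑ ε : Fin n → Bool, gauge ℒ (x i ε) ^ 2) / 2 ^ n)) :
    ∃ f₀ : EuclideanSpace ℝ (Fin d) → ℝ,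
      (∀ x, 0 ≤ f₀ x) ∧
      ConvexOn ℝ Set.univ f₀ ∧
      (∀ t : ℝ, 0 ≤ t → ∀ y, f₀ (t • y) = t ^ 2 * f₀ y) ∧
      -- (i) `1`-strong convexity w.r.t. `‖·‖_{ℒ^c}`, via subgradients
      (∀ x y g : EuclideanSpace ℝ (Fin d),
        (∀ z, f₀ x + ⟪g, z - x⟫ ≤ f₀ z) →
        f₀ x + ⟪g, y - x⟫ + (1 / 2) * gauge (dualSet ℒ) (y - x) ^ 2 ≤ f₀ y) ∧
      -- (ii) value bounds
      (∀ x, (1 / 2) * gauge (dualSet ℒ) x ^ 2 ≤ f₀ x ∧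
        f₀ x ≤ (C ^ 2 / 2) * gauge 𝒳 x ^ 2) ∧
      -- (iii) Lipschitz-type estimate
      (∀ x₁ x₂, |f₀ x₁ - f₀ x₂|
        ≤ C ^ 2 * gauge 𝒳 (x₁ - x₂) * max (gauge 𝒳 x₁) (gauge 𝒳 x₂)) := by
  have hR : 0 < R := hr.trans_le hrR
  exact stmt11_general 𝒳 ℒ hC hsym𝒳 (absorbent_of_closedBall_subset hr hball𝒳₁)
    (absorbent_of_closedBall_subset (inv_pos.2 hR)
      (closedBall_inv_subset_innerPolar hR hball𝒳₂)) hmg
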